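/- arXiv:1601.05622 — 2 statements merged into one kernel-verified Lean document; each statement's English description precedes it below -/
import Mathlib

section
/- Let (R,m) be a one-dimensional Cohen–Macaulay local ring with infinite residue field, I_1,…,I_s m-primary ideals, and F = {F(n)}_{n∈ℤ^s} an I-admissible filtration of ideals in R. Then the complete reduction number of F with respect to a complete reduction is independent of the choice of complete reduction: if A and A' are complete reductions of F, then r_A(F) = r_{A'}(F). -/
/-! Common definitions for multigraded filtrations of ideals
(following Sarkar–Verma, "Postulation and reduction vectors of
multigraded filtrations of ideals"). -/

open Finset IsLocalRing

/-- The vector `e = (1,…,1) ∈ ℤˢ`. -/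
def evec (s : ℕ) : Fin s → ℤ := fun _ => 1

/-- `n⁺`, the componentwise positive part of a vector. -/
def vplus {s : ℕ} (n : Fin s → ℤ) : Fin s → ℤ := fun i => max (n i) 0

/-- `I^n = I₁^{n₁} ⋯ I_s^{n_s}` with the convention `I_i^{n_i} = R` for `n_i ≤ 0`. -/
def prodPow {R : Type*} [CommRing R] {s : ℕ} (I : Fin s → Ideal R) (n : Fin s → ℤ) : Ideal R :=
  ∏ i, I i ^ (n i).toNat

/-- An ideal is `m`-primary iff it is proper and contains a power of the maximal ideal. -/
def IsMPrimary (R : Type*) [CommRing R] [IsLocalRing R] (I : Ideal R) : Prop :=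
  I ≠ ⊤ ∧ maximalIdeal R ≤ I.radical

/-- A Cohen–Macaulay local ring: some system of parameters (a regular sequence of
length equal to the Krull dimension inside the maximal ideal) exists. -/
def IsCMLocal (R : Type*) [CommRing R] [IsLocalRing R] : Prop :=
  ∃ rs : List R, (∀ x ∈ rs, x ∈ maximalIdeal R) ∧ RingTheory.Sequence.IsRegular R rs ∧
    (rs.length : WithBot ℕ∞) = ringKrullDim R

/-- A `ℤˢ`-graded `I`-admissible filtration of ideals.  Admissibility (finiteness of the
extended Rees ring `R'(F)` as a module over `R'(I)`) is recorded through the equivalent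
condition that `F(n + m) = I^n F(m)` for all `n ≥ 0`, for a suitable fixed `m ≥ 0`. -/
structure AdmissibleFiltration (R : Type*) [CommRing R] (s : ℕ) (I : Fin s → Ideal R) where
  F : (Fin s → ℤ) → Ideal R
  prodPow_le : ∀ n, prodPow I n ≤ F n
  mul_le : ∀ m n, F m * F n ≤ F (m + n)
  antitone : ∀ m n : Fin s → ℤ, m ≤ n → F n ≤ F m
  plus_eq : ∀ n, F n = F (vplus n)
  admissible : ∃ m : Fin s → ℤ, 0 ≤ m ∧
    ∀ n : Fin s → ℤ, 0 ≤ n → F (n + m) = prodPow I n * F m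

/-- The length `λ_R(M)` of a module, as an integer (the longest chain of submodules;
this is the usual length for modules of finite length). -/
noncomputable def lenI (R M : Type*) [CommRing R] [AddCommGroup M] [Module R M] : ℤ :=
  (((Order.krullDim (Submodule R M)).unbotD 0).toNat : ℤ)

/-- The Hilbert function `H_F(n) = λ(R/F(n))` of a filtration. -/
noncomputable def hilbFn {R : Type*} [CommRing R] {s : ℕ} {I : Fin s → Ideal R}
    (F : AdmissibleFiltration R s I) (n : Fin s → ℤ) : ℤ :=
  lenI R (R ⧸ F.F n)

/-- The multigraded Hilbert polynomial with coefficient data `c = (e_α)`: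
`P(n) = Σ_{|α| ≤ d} (−1)^{d−|α|} e_α ∏ᵢ binom(nᵢ+αᵢ−1, αᵢ)`. -/
noncomputable def hilbPoly (s d : ℕ) (c : (Fin s → ℕ) → ℤ) (n : Fin s → ℤ) : ℤ :=
  ∑ α ∈ Finset.univ.filter (fun α : Fin s → Fin (d+1) => (∑ i, (α i : ℕ)) ≤ d),
    (-1)^(d - ∑ i, (α i : ℕ)) * c (fun i => (α i : ℕ)) *
      ∏ i, Ring.choose (n i + ((α i : ℕ) : ℤ) - 1) (α i : ℕ)

/-- `c : (Fin s → ℕ) → ℤ` is the family of Hilbert coefficients of `F`: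
the corresponding polynomial agrees with the Hilbert function for all large `n`. -/
noncomputable def IsHilbCoeffs {R : Type*} [CommRing R] {s : ℕ} {I : Fin s → Ideal R}
    (F : AdmissibleFiltration R s I) (d : ℕ) (c : (Fin s → ℕ) → ℤ) : Prop :=
  ∃ N : ℕ, ∀ n : Fin s → ℤ, (∀ i, (N : ℤ) ≤ n i) → hilbPoly s d c n = hilbFn F n

/-- The Samuel polynomial `P_a(n) = Σ_{i=0}^{d} (−1)^i e_i binom(n+d−1−i, d−i)` with
coefficient data `c = (e_i)`. -/
noncomputable def samuelPoly (d : ℕ) (c : ℕ → ℤ) (n : ℤ) : ℤ :=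
  ∑ i ∈ Finset.range (d + 1), (-1)^i * c i * Ring.choose (n + (d : ℤ) - 1 - (i : ℤ)) (d - i)

/-- `c` is the family of Hilbert coefficients of the `m`-primary ideal `a`. -/
noncomputable def IsSamuelCoeffs {R : Type*} [CommRing R] (a : Ideal R) (d : ℕ)
    (c : ℕ → ℤ) : Prop :=
  ∃ N : ℕ, ∀ n : ℕ, N ≤ n → samuelPoly d c (n : ℤ) = lenI R (R ⧸ a ^ n)

section Reductions

variable {R : Type*} [CommRing R] {s d : ℕ} {I : Fin s → Ideal R}

/-- The ideal `J = (y₁,…,y_d)` of a complete reduction datum, where `y_j = x_{1j}⋯x_{sj}`. -/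
def crIdeal (x : Fin s → Fin d → R) : Ideal R :=
  Ideal.span (Set.range fun j => ∏ i, x i j)

/-- `A = {x_{ij} ∈ I_i}` is a complete reduction of `F`: `J·F(n) = F(n+e)` for all large `n`. -/
def IsCompleteReduction (F : AdmissibleFiltration R s I) (x : Fin s → Fin d → R) : Prop :=
  (∀ i j, x i j ∈ I i) ∧
  ∃ N : ℕ, ∀ n : Fin s → ℤ, (∀ i, (N : ℤ) ≤ n i) →
    crIdeal x * F.F n = F.F (n + evec s)

/-- A good complete reduction: in addition `F(m) ∩ (y₁) = y₁ F(m−e)` for all large `m`. -/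
def IsGoodCompleteReduction (F : AdmissibleFiltration R s I) (x : Fin s → Fin d → R) : Prop :=
  IsCompleteReduction F x ∧
  ∀ h : 0 < d, ∃ N : ℕ, ∀ m : Fin s → ℤ, (∀ i, (N : ℤ) ≤ m i) →
    F.F m ⊓ Ideal.span {∏ i, x i ⟨0, h⟩} =
      Ideal.span {∏ i, x i ⟨0, h⟩} * F.F (m - evec s)

end Reductions

/-- The first difference operator `Δ¹ f (n) = f(n+e) − f(n)`; `Δ^k` is its `k`-th iterate. -/
def deltaOp {s : ℕ} (f : (Fin s → ℤ) → ℤ) : (Fin s → ℤ) → ℤ :=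
  fun n => f (n + evec s) - f n

/-- The Ratliff–Rush closure filtration `F̆(n) = ⋃_{k ≥ 1} (F(n+ke) : F(e)^k)`. -/
def ratliffRush {R : Type*} [CommRing R] {s : ℕ} {I : Fin s → Ideal R}
    (F : AdmissibleFiltration R s I) (n : Fin s → ℤ) : Ideal R :=
  ⨆ k : ℕ, (F.F (n + ((k + 1) : ℕ) • evec s)).colon ((F.F (evec s) ^ (k + 1) : Ideal R) : Set R)

/-- Vanishing of `H¹_{R₊₊}(R(F))_n` for all `n ∈ ℕˢ`.  By Proposition 4.1 of the paper
(see STATEMENT 9), the degree-`n` component of this local cohomology module is isomorphic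
to `F̆(n)/F(n)`, so its vanishing for all `n ≥ 0` is the statement that the Ratliff–Rush
closure filtration agrees with `F` in all nonnegative degrees. -/
def H1ReesVanishes {R : Type*} [CommRing R] {s : ℕ} {I : Fin s → Ideal R}
    (F : AdmissibleFiltration R s I) : Prop :=
  ∀ n : Fin s → ℤ, 0 ≤ n → ratliffRush F n = F.F n

section PostulationReduction

variable {R : Type*} [CommRing R] {s d : ℕ} {I : Fin s → Ideal R}

/-- The set `P(F)` of postulation vectors of `F` (w.r.t. the Hilbert coefficient data
`c` of its Hilbert polynomial): those `n ∈ ℤˢ` with `H_F(m) = P_F(m)` for all `m ≥ n`. -/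
noncomputable def postSet (F : AdmissibleFiltration R s I) (d : ℕ)
    (c : (Fin s → ℕ) → ℤ) : Set (Fin s → ℤ) :=
  {n | ∀ m : Fin s → ℤ, n ≤ m → hilbFn F m = hilbPoly s d c m}

/-- The set `R_A(F)` of reduction vectors of `F` with respect to a complete reduction
datum `x`: those `r ∈ ℕˢ` with `J·F(n) = F(n+e)` for all `n ≥ r`. -/
def redSet (F : AdmissibleFiltration R s I) (x : Fin s → Fin d → R) :
    Set (Fin s → ℤ) :=
  {r | 0 ≤ r ∧ ∀ n : Fin s → ℤ, r ≤ n → crIdeal x * F.F n = F.F (n + evec s)}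

/-- The complete reduction number `r_A(F)`: the least `k ∈ ℕ` such that
`J·F(n) = F(n+e)` for all `n ≥ ke`. -/
noncomputable def crNumber (F : AdmissibleFiltration R s I) (x : Fin s → Fin d → R) : ℕ :=
  sInf {k : ℕ | ∀ n : Fin s → ℤ, (∀ i, (k : ℤ) ≤ n i) →
    crIdeal x * F.F n = F.F (n + evec s)}

end PostulationReduction

/-!
If `J F(n) = F(n + e)` for all `n ≥ ke`, then `J ^ j F(n) = F(n + je)` there. Given a second
complete reduction with ideal `J'`, choose `N` so that `J' F(n) = F(n + e)` for `n ≥ Ne`. For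
`n ≥ ke` this yields `J ^ N J' F(n) = F(n + (N + 1)e) = J ^ N F(n + e)`. In dimension one
`J = (y)`, and `y` is a nonzerodivisor because `(y)` contains `F(n)` for large `n`, hence a product
of powers of the `I_i`, each of which contains a nonzerodivisor. Cancelling `J ^ N` gives
`J' F(n) = F(n + e)` from the same `k` on.
-/

section Regular

variable {R : Type*} [CommSemiring R]

lemma isRegular_span_singleton {a : R} (ha : IsRegular a) : IsRegular (Ideal.span {a}) := by
  have le_of_mul_le {A B : Ideal R} (h : Ideal.span {a} * A ≤ Ideal.span {a} * B) : A ≤ B := by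
    intro z hz
    obtain ⟨w, hw, hzw⟩ := Ideal.span_singleton_mul_le_span_singleton_mul.1 h z hz
    rwa [ha.left hzw]
  exact isLeftRegular_iff_isRegular.1 fun A B h ↦
    le_antisymm (le_of_mul_le h.le) (le_of_mul_le h.ge)

lemma isRegular_of_isRegular_mem_span_singleton {a t : R} (ht : IsRegular t)
    (hta : t ∈ Ideal.span {a}) : IsRegular a := by
  obtain ⟨c, rfl⟩ := Ideal.mem_span_singleton.1 hta
  exact (isRegular_mul_iff.1 ht).1

end Regular

section Local

variable {R : Type*} [CommRing R] [IsLocalRing R]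

lemma IsCMLocal.exists_isRegular_mem_maximalIdeal (hCM : IsCMLocal R)
    (hdim : 0 < ringKrullDim R) : ∃ t ∈ maximalIdeal R, IsRegular t := by
  obtain ⟨rs, hmem, hreg, hlen⟩ := hCM
  cases rs with
  | nil => simp [← hlen] at hdim
  | cons t l =>
    have ht : IsSMulRegular R t :=
      ((RingTheory.Sequence.isWeaklyRegular_cons_iff R t l).1 hreg.toIsWeaklyRegular).1
    exact ⟨t, hmem t List.mem_cons_self, isLeftRegular_iff_isRegular.1 (isLeftRegular_iff.2 ht)⟩

lemma IsMPrimary.exists_isRegular_mem {I : Ideal R} (hI : IsMPrimary R I) (hCM : IsCMLocal R)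
    (hdim : 0 < ringKrullDim R) : ∃ t ∈ I, IsRegular t := by
  obtain ⟨t, htm, ht⟩ := hCM.exists_isRegular_mem_maximalIdeal hdim
  obtain ⟨k, hk⟩ := hI.2 htm
  exact ⟨t ^ k, hk, ht.pow k⟩

end Local

section ReducesFrom

variable {R : Type*} [CommSemiring R] {s : ℕ} {G : (Fin s → ℤ) → Ideal R} {J J' : Ideal R} {k : ℕ}

/-- `J` reduces the family of ideals `G` from degree `ke` on: `J G(n) = G(n + e)` for all
`n ≥ ke`. The complete reduction number is the least such `k` for `J = crIdeal x`. -/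
def ReducesFrom (G : (Fin s → ℤ) → Ideal R) (J : Ideal R) (k : ℕ) : Prop :=
  ∀ n : Fin s → ℤ, (∀ i, (k : ℤ) ≤ n i) → J * G n = G (n + evec s)

lemma add_nsmul_evec_apply (n : Fin s → ℤ) (j : ℕ) (i : Fin s) :
    (n + j • evec s) i = n i + j := by
  simp [evec]

lemma ReducesFrom.pow_mul (hJ : ReducesFrom G J k) {n : Fin s → ℤ} (hn : ∀ i, (k : ℤ) ≤ n i)
    (j : ℕ) : J ^ j * G n = G (n + j • evec s) := by
  induction j with
  | zero => simp
  | succ j ih =>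
    have hnj : ∀ i, (k : ℤ) ≤ (n + j • evec s) i := fun i ↦ by
      have := hn i
      rw [add_nsmul_evec_apply]
      lia
    rw [pow_succ', mul_assoc, ih, hJ _ hnj, succ_nsmul, add_assoc]

lemma ReducesFrom.of_isRegular {N : ℕ} (hJ : ReducesFrom G J k) (hJ' : ReducesFrom G J' N)
    (hreg : IsRegular J) : ReducesFrom G J' k := by
  intro n hn
  have hnN : ∀ i, (N : ℤ) ≤ (n + N • evec s) i := fun i ↦ by
    have := hn i
    rw [add_nsmul_evec_apply]
    lia
  apply (hreg.pow N).left
  calc J ^ N * (J' * G n)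
      = J' * G (n + N • evec s) := by rw [mul_left_comm, hJ.pow_mul hn]
    _ = G (n + (N + 1) • evec s) := by rw [hJ' _ hnN, succ_nsmul, add_assoc]
    _ = J ^ N * (J * G n) := by rw [← hJ.pow_mul hn, pow_succ, mul_assoc]
    _ = J ^ N * G (n + evec s) := by rw [hJ n hn]

end ReducesFrom

section CompleteReduction

variable {R : Type*} [CommRing R] {s : ℕ} {I : Fin s → Ideal R} {F : AdmissibleFiltration R s I}

lemma AdmissibleFiltration.exists_isRegular_mem (F : AdmissibleFiltration R s I)
    (hI : ∀ i, ∃ t ∈ I i, IsRegular t) (n : Fin s → ℤ) : ∃ t ∈ F.F n, IsRegular t := by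
  choose t htI ht using hI
  refine ⟨∏ i, t i ^ (n i).toNat, F.prodPow_le n ?_, ?_⟩
  · exact Ideal.prod_mem_prod fun i _ ↦ Ideal.pow_mem_pow (htI i) _
  · exact IsRegular.prod fun i _ ↦ (ht i).pow _

lemma IsCompleteReduction.exists_isRegular_mem_crIdeal {d : ℕ} {x : Fin s → Fin d → R}
    (hx : IsCompleteReduction F x) (hI : ∀ i, ∃ t ∈ I i, IsRegular t) :
    ∃ t ∈ crIdeal x, IsRegular t := by
  obtain ⟨-, N, hN⟩ := hx
  obtain ⟨t, htF, ht⟩ := F.exists_isRegular_mem hI ((fun _ ↦ (N : ℤ)) + evec s)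
  rw [← hN _ fun _ ↦ le_rfl] at htF
  exact ⟨t, Ideal.mul_le_left htF, ht⟩

lemma crIdeal_eq_span_singleton (x : Fin s → Fin 1 → R) : crIdeal x = Ideal.span {∏ i, x i 0} :=
  congrArg Ideal.span Set.range_unique

lemma IsCompleteReduction.isRegular_crIdeal {x : Fin s → Fin 1 → R}
    (hx : IsCompleteReduction F x) (hI : ∀ i, ∃ t ∈ I i, IsRegular t) :
    IsRegular (crIdeal x) := by
  obtain ⟨t, htx, ht⟩ := hx.exists_isRegular_mem_crIdeal hI
  rw [crIdeal_eq_span_singleton] at htx ⊢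
  exact isRegular_span_singleton (isRegular_of_isRegular_mem_span_singleton ht htx)

lemma IsCompleteReduction.crNumber_eq_of_isRegular {d d' : ℕ} {x : Fin s → Fin d → R}
    {x' : Fin s → Fin d' → R} (hx : IsCompleteReduction F x) (hx' : IsCompleteReduction F x')
    (hreg : IsRegular (crIdeal x)) (hreg' : IsRegular (crIdeal x')) :
    crNumber F x = crNumber F x' := by
  obtain ⟨-, N, hN⟩ := hx
  obtain ⟨-, N', hN'⟩ := hx'
  have reducesFrom_iff (k : ℕ) :
      ReducesFrom F.F (crIdeal x) k ↔ ReducesFrom F.F (crIdeal x') k :=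
    ⟨fun h ↦ h.of_isRegular hN' hreg, fun h ↦ h.of_isRegular hN hreg'⟩
  exact congrArg sInf (Set.ext reducesFrom_iff)

theorem complete_reduction_number_independent_dim_one_general {x x' : Fin s → Fin 1 → R}
    (hI : ∀ i, ∃ t ∈ I i, IsRegular t)
    (hx : IsCompleteReduction F x) (hx' : IsCompleteReduction F x') :
    crNumber F x = crNumber F x' :=
  hx.crNumber_eq_of_isRegular hx' (hx.isRegular_crIdeal hI) (hx'.isRegular_crIdeal hI)

end CompleteReduction

/-- STATEMENT 16: Let `(R,m)` be a one-dimensional Cohen–Macaulay local ring with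
infinite residue field, `I₁,…,I_s` `m`-primary, `F` an `I`-admissible filtration.
Then the complete reduction number of `F` is independent of the choice of complete
reduction: `r_A(F) = r_{A'}(F)` for any two complete reductions `A, A'` of `F`. -/
theorem complete_reduction_number_independent_dim_one
    (R : Type*) [CommRing R] [IsLocalRing R] [IsNoetherianRing R]
    [Infinite (IsLocalRing.ResidueField R)]
    (s : ℕ) (hdim : ringKrullDim R = 1) (hCM : IsCMLocal R)
    (I : Fin s → Ideal R) (hI : ∀ i, IsMPrimary R (I i))
    (F : AdmissibleFiltration R s I)
    (x x' : Fin s → Fin 1 → R)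
    (hx : IsCompleteReduction F x) (hx' : IsCompleteReduction F x') :
    crNumber F x = crNumber F x' :=
  complete_reduction_number_independent_dim_one_general
    (fun i ↦ (hI i).exists_isRegular_mem hCM (hdim ▸ zero_lt_one)) hx hx'
end

section
/- Let (R,m) be a Cohen–Macaulay local ring of dimension two with infinite residue field, I_1,…,I_s m-primary ideals with s≥2, F = {F(n)}_{n∈ℤ^s} an I-admissible filtration of ideals in R, and A = {x_{ij}∈I_i : j=1,2; i=1,…,s} a good complete reduction of F. Suppose H^1_{R_{++}}(R(F))_n = 0 for all n≥0. Then P(F) ⊆ ℕ^s and the map f(n) = n+e gives a one-to-one correspondence between P(F) and {r∈R_A(F) : r≥e}, with inverse f^{−1}(r) = r−e. -/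
/-! Common definitions for multigraded filtrations of ideals
(following Sarkar–Verma, "Postulation and reduction vectors of
multigraded filtrations of ideals"). -/

open Finset IsLocalRing

/-!
Let `a, b` generate an `m`-primary ideal. They form a system of parameters, so their Koszul
complex `R → R² → R` is exact up to `R/(a, b)`, and additivity of length along the submodules
`(A : b) ∩ (B : a)`, `A ⊕ B`, `aA + bB` gives
`λ(R/((A : b) ∩ (B : a))) + λ(R/(aA + bB)) = λ(R/A) + λ(R/B) + λ(R/(a, b))`.
For `a ∈ F(u)`, `b ∈ F(v)`, `A = F(m+v)` and `B = F(m+u)` this expresses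
`Δ_u Δ_v H(m) - λ(R/(a, b))` as the length of `((A : b) ∩ (B : a)) / F(m)` minus the length of
`F(m+u+v) / (aA + bB)`.

For `u = v = e` and `(a, b) = J` the first length vanishes when `m ≥ 0`, being bounded by that of
`F̆(m)/F(m)`. Hence `Δ_e² H(m)` equals the constant `Δ_e² P = λ(R/J)` exactly when
`J F(m+e) = F(m+2e)`. Since `H = P` far out, `H = P` on `{m ≥ n}` if and only if
`Δ_e² H = Δ_e² P` there, which is the correspondence for `n ≥ 0`.

For `u = e_i`, `v = e_j` and the pair `x_{i1}, x_{j2}` the second length vanishes for large `m`, so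
the constant `Δ_{e_i} Δ_{e_j} P` is positive. If `n` were a postulation vector with `n_i < 0`, then
for `j ≠ i` it would equal `Δ_{e_j} Δ_{e_i} H(n)`, which is zero because `H(n) = H(n⁺)`.
-/

section Length

variable {R : Type*} [CommRing R]

lemma lenI_eq_toNat_length (M : Type*) [AddCommGroup M] [Module R M] :
    lenI R M = (Module.length R M).toNat := by
  rw [lenI, ← Module.coe_length]
  rfl

variable {L M N : Type*} [AddCommGroup L] [Module R L] [AddCommGroup M] [Module R M]
  [AddCommGroup N] [Module R N]

lemma lenI_quotient_le_of_le {D E : Submodule R M} (hDE : D ≤ E)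
    (hD : Module.length R (M ⧸ D) ≠ ⊤) : lenI R (M ⧸ E) ≤ lenI R (M ⧸ D) := by
  rw [lenI_eq_toNat_length, lenI_eq_toNat_length]
  exact_mod_cast ENat.toNat_le_toNat
    (Module.length_le_of_surjective _ (Submodule.factor_surjective hDE)) hD

lemma eq_of_le_of_lenI_quotient_eq {D E : Submodule R M} (hDE : D ≤ E)
    (hD : Module.length R (M ⧸ D) ≠ ⊤) (h : lenI R (M ⧸ D) = lenI R (M ⧸ E)) : D = E := by
  by_contra hne
  have hE : Module.length R (M ⧸ E) ≠ ⊤ := ne_top_of_le_ne_top hD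
    (Module.length_le_of_surjective _ (Submodule.factor_surjective hDE))
  have hlt : Module.length R (M ⧸ E) < Module.length R (M ⧸ D) := by
    rw [Module.length_quotient] at hE ⊢
    rw [Module.length_quotient]
    exact Order.coheight_strictAnti (lt_of_le_of_ne hDE hne) hE.lt_top
  rw [lenI_eq_toNat_length, lenI_eq_toNat_length, Nat.cast_inj] at h
  exact hlt.ne' (by rw [← ENat.natCast_toNat hD, h, ENat.natCast_toNat hE])

lemma length_quotient_prod (A : Submodule R M) (B : Submodule R N) :
    Module.length R ((M × N) ⧸ A.prod B) =
      Module.length R (M ⧸ A) + Module.length R (N ⧸ B) := by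
  have hker : A.prod B = LinearMap.ker (A.mkQ.prodMap B.mkQ) := by
    rw [LinearMap.ker_prodMap, A.ker_mkQ, B.ker_mkQ]
  rw [hker, ← Module.length_prod]
  exact (LinearMap.quotKerEquivOfSurjective _
    (Function.Surjective.prodMap A.mkQ_surjective B.mkQ_surjective)).length_eq

lemma length_quotient_comap_add_length_quotient_map {φ : L →ₗ[R] M} {ψ : M →ₗ[R] N}
    (h : Function.Exact φ ψ) (W : Submodule R M) :
    Module.length R (L ⧸ W.comap φ) + Module.length R (N ⧸ W.map ψ) =
      Module.length R (M ⧸ W) + Module.length R (N ⧸ LinearMap.range ψ) := by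
  let φ' : (L ⧸ W.comap φ) →ₗ[R] (M ⧸ W) := (W.comap φ).mapQ W φ le_rfl
  let ψ' : (M ⧸ W) →ₗ[R] (N ⧸ W.map ψ) := W.mapQ (W.map ψ) ψ (W.le_comap_map ψ)
  have hφ' : Function.Injective φ' := by
    rw [← LinearMap.ker_eq_bot, Submodule.ker_mapQ, Submodule.mkQ_map_self]
  have hexact : Function.Exact φ' ψ' :=
    (h.exact_mapQ_iff le_rfl (W.le_comap_map ψ)).2 inf_le_right
  have hmid : Module.length R (M ⧸ W) =
      Module.length R (L ⧸ W.comap φ) + Module.length R (LinearMap.range ψ') :=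
    Module.length_eq_add_of_exact φ' ψ'.rangeRestrict hφ' ψ'.surjective_rangeRestrict
      (LinearMap.exact_iff.2 (ψ'.ker_rangeRestrict.trans hexact.linearMap_ker_eq))
  have hlast : Module.length R (N ⧸ W.map ψ) =
      Module.length R (LinearMap.range ψ') + Module.length R (N ⧸ LinearMap.range ψ) := by
    rw [Module.length_eq_add_of_exact (LinearMap.range ψ').subtype (LinearMap.range ψ').mkQ
      (Submodule.subtype_injective _) (Submodule.mkQ_surjective _)
      (LinearMap.exact_subtype_mkQ _), Submodule.range_mapQ,
      (Submodule.quotientQuotientEquivQuotient _ _ LinearMap.map_le_range).length_eq]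
  rw [hmid, hlast, add_assoc]

variable [IsLocalRing R] [IsNoetherianRing R]

lemma length_quotient_ne_top {A : Ideal R} (hA : maximalIdeal R ≤ A.radical) :
    Module.length R (R ⧸ A) ≠ ⊤ := by
  by_cases hAtop : A = ⊤
  · have : Subsingleton (R ⧸ A) := Ideal.Quotient.subsingleton_iff.2 hAtop
    exact Module.length_eq_zero.trans_ne ENat.zero_ne_top
  · have hmin : maximalIdeal R ∈ A.minimalPrimes :=
      ⟨⟨inferInstance, le_maximalIdeal hAtop⟩,
        fun q hq _ => hA.trans (hq.1.radical_le_iff.2 hq.2)⟩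
    have := quotient_artinian_of_mem_minimalPrimes_of_isLocalRing A hmin
    rw [Module.length_eq_of_surjective (R := R ⧸ A) Ideal.Quotient.mk_surjective]
    exact Module.length_ne_top

lemma lenI_quotient_pos {A : Ideal R} (hne : A ≠ ⊤) (hA : maximalIdeal R ≤ A.radical) :
    0 < lenI R (R ⧸ A) := by
  have : Nontrivial (R ⧸ A) := Ideal.Quotient.nontrivial_iff.2 hne
  rw [lenI_eq_toNat_length, Nat.cast_pos]
  exact ENat.toNat_pos Module.length_pos.ne' (length_quotient_ne_top hA)

end Length

section Koszul

variable {R : Type*} [CommRing R] {L M : Type*} [AddCommGroup L] [Module R L] [AddCommGroup M]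
  [Module R M]

lemma mem_of_forall_mem_pow_smul_mem {𝔞 : Ideal R} {p : Submodule R M}
    (h : ∀ z, (∀ r ∈ 𝔞, r • z ∈ p) → z ∈ p) (n : ℕ) {z : M}
    (hz : ∀ r ∈ 𝔞 ^ n, r • z ∈ p) : z ∈ p := by
  induction n generalizing z with
  | zero => simpa using hz 1 (by simp)
  | succ n ih =>
    refine h z fun r hr => ih fun r' hr' => ?_
    rw [← mul_smul]
    exact hz _ (pow_succ 𝔞 n ▸ Ideal.mul_mem_mul hr' hr)

lemma mem_range_of_smul_mem_range {φ : L →ₗ[R] M} (hφ : Function.Injective φ) {u v : R}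
    (hu : IsSMulRegular M u) (hv : IsSMulRegular (QuotSMulTop u L) v) {z : M}
    (huz : u • z ∈ LinearMap.range φ) (hvz : v • z ∈ LinearMap.range φ) :
    z ∈ LinearMap.range φ := by
  obtain ⟨p, hp⟩ := huz
  obtain ⟨q, hq⟩ := hvz
  have hpq : v • p = u • q := hφ (by rw [map_smul, map_smul, hp, hq, smul_comm])
  obtain ⟨p', -, rfl⟩ := (Submodule.mem_smul_pointwise_iff_exists _ _ _).1
    (mem_of_isSMulRegular_quotient_of_smul_mem hv (x := p)
      (hpq ▸ Submodule.smul_mem_pointwise_smul q u ⊤ trivial))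
  exact ⟨p', hu (by simpa using hp)⟩

/-- The differential `R → R²`, `t ↦ (bt, -at)`, of the Koszul complex of the pair `a, b`. -/
def koszulDiff₂ (a b : R) : R →ₗ[R] R × R :=
  (LinearMap.mulLeft R b).prod (-LinearMap.mulLeft R a)

/-- The differential `R² → R`, `(p, q) ↦ ap + bq`, of the Koszul complex of the pair `a, b`. -/
def koszulDiff₁ (a b : R) : R × R →ₗ[R] R :=
  (LinearMap.mulLeft R a).coprod (LinearMap.mulLeft R b)

lemma range_koszulDiff₁ (a b : R) : LinearMap.range (koszulDiff₁ a b) = Ideal.span {a, b} := by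
  ext z
  simp [koszulDiff₁, Ideal.mem_span_pair, mul_comm]

lemma map_koszulDiff₁_prod (a b : R) (A B : Ideal R) :
    (Submodule.prod A B).map (koszulDiff₁ a b) = Ideal.span {a} * A ⊔ Ideal.span {b} * B := by
  rw [koszulDiff₁, LinearMap.coprod_map_prod]
  congr 1 <;> ext z <;> simp [Ideal.mem_span_singleton_mul]

lemma comap_koszulDiff₂_prod (a b : R) (A B : Ideal R) :
    (Submodule.prod A B).comap (koszulDiff₂ a b) = A.colon {b} ⊓ B.colon {a} := by
  ext t
  simp [koszulDiff₂, Submodule.mem_colon_singleton, mul_comm]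

lemma koszulDiff₂_injective {u a b : R} (hu : IsSMulRegular R u)
    (hab : u ∈ (Ideal.span {a, b}).radical) : Function.Injective (koszulDiff₂ a b) := by
  refine (injective_iff_map_eq_zero _).2 fun t ht => ?_
  have hbt : b * t = 0 := congrArg Prod.fst ht
  have hat : a * t = 0 := neg_eq_zero.1 (congrArg Prod.snd ht)
  obtain ⟨n, hn⟩ := hab
  obtain ⟨c, d, hcd⟩ := Ideal.mem_span_pair.1 hn
  refine (hu.pow n).right_eq_zero_of_smul ?_
  rw [smul_eq_mul, ← hcd]
  linear_combination c * hat + d * hbt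

-- Multiplication by `a` and by `b` is null-homotopic on the Koszul complex of `a, b`.
lemma smul_mem_range_koszulDiff₂ {a b r : R} (hr : r ∈ Ideal.span {a, b}) {z : R × R}
    (hz : koszulDiff₁ a b z = 0) : r • z ∈ LinearMap.range (koszulDiff₂ a b) := by
  obtain ⟨c, d, rfl⟩ := Ideal.mem_span_pair.1 hr
  have hz' : a * z.1 + b * z.2 = 0 := hz
  refine ⟨d * z.1 - c * z.2, Prod.ext ?_ ?_⟩
  · change b * (d * z.1 - c * z.2) = (c * a + d * b) * z.1
    linear_combination -c * hz'
  · change -(a * (d * z.1 - c * z.2)) = (c * a + d * b) * z.2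
    linear_combination -d * hz'

lemma exact_koszulDiff {u v a b : R} (huv : RingTheory.Sequence.IsWeaklyRegular R [u, v])
    (hab : Ideal.span {u, v} ≤ (Ideal.span {a, b}).radical) :
    Function.Exact (koszulDiff₂ a b) (koszulDiff₁ a b) := by
  obtain ⟨hu, hv⟩ := (RingTheory.Sequence.isWeaklyRegular_cons_iff ..).1 huv
  rw [RingTheory.Sequence.isWeaklyRegular_singleton_iff] at hv
  have hmemu : u ∈ Ideal.span {u, v} := Ideal.subset_span (Set.mem_insert u {v})
  have hmemv : v ∈ Ideal.span {u, v} := Ideal.subset_span (Set.mem_insert_of_mem u rfl)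
  have hinj : Function.Injective (koszulDiff₂ a b) := koszulDiff₂_injective hu (hab hmemu)
  have huprod : IsSMulRegular (R × R) u := fun x y hxy =>
    Prod.ext (hu (congrArg Prod.fst hxy)) (hu (congrArg Prod.snd hxy))
  obtain ⟨n, hn⟩ := Ideal.exists_pow_le_of_le_radical_of_fg hab (Submodule.fg_span (by simp))
  intro z
  constructor
  · exact fun hz => mem_of_forall_mem_pow_smul_mem
      (fun w hw => mem_range_of_smul_mem_range hinj huprod hv (hw u hmemu) (hw v hmemv))
      n fun r hr => smul_mem_range_koszulDiff₂ (hn hr) hz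
  · rintro ⟨t, rfl⟩
    change a * (b * t) + b * -(a * t) = 0
    ring

lemma length_quotient_koszul {a b : R} (h : Function.Exact (koszulDiff₂ a b) (koszulDiff₁ a b))
    (A B : Ideal R) :
    Module.length R (R ⧸ (A.colon {b} ⊓ B.colon {a})) +
        Module.length R (R ⧸ (Ideal.span {a} * A ⊔ Ideal.span {b} * B)) =
      Module.length R (R ⧸ A) + Module.length R (R ⧸ B) +
        Module.length R (R ⧸ Ideal.span {a, b}) := by
  rw [← comap_koszulDiff₂_prod, ← map_koszulDiff₁_prod, ← range_koszulDiff₁,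
    ← length_quotient_prod A B]
  exact length_quotient_comap_add_length_quotient_map h (Submodule.prod A B)

lemma length_quotient_koszul_ne_top {a b : R}
    (h : Function.Exact (koszulDiff₂ a b) (koszulDiff₁ a b)) {A B : Ideal R}
    (hA : Module.length R (R ⧸ A) ≠ ⊤) (hB : Module.length R (R ⧸ B) ≠ ⊤)
    (hab : Module.length R (R ⧸ Ideal.span {a, b}) ≠ ⊤) :
    Module.length R (R ⧸ (A.colon {b} ⊓ B.colon {a})) ≠ ⊤ ∧
      Module.length R (R ⧸ (Ideal.span {a} * A ⊔ Ideal.span {b} * B)) ≠ ⊤ := by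
  rw [← not_or, ← ENat.add_eq_top, length_quotient_koszul h]
  simp [hA, hB, hab]

lemma lenI_quotient_koszul {a b : R} (h : Function.Exact (koszulDiff₂ a b) (koszulDiff₁ a b))
    {A B : Ideal R} (hA : Module.length R (R ⧸ A) ≠ ⊤) (hB : Module.length R (R ⧸ B) ≠ ⊤)
    (hab : Module.length R (R ⧸ Ideal.span {a, b}) ≠ ⊤) :
    lenI R (R ⧸ (A.colon {b} ⊓ B.colon {a})) +
        lenI R (R ⧸ (Ideal.span {a} * A ⊔ Ideal.span {b} * B)) =
      lenI R (R ⧸ A) + lenI R (R ⧸ B) + lenI R (R ⧸ Ideal.span {a, b}) := by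
  obtain ⟨hcolon, hsup⟩ := length_quotient_koszul_ne_top h hA hB hab
  have hlength := congrArg ENat.toNat (length_quotient_koszul h A B)
  rw [ENat.toNat_add hcolon hsup, ENat.toNat_add (by simp [hA, hB]) hab,
    ENat.toNat_add hA hB] at hlength
  simp only [lenI_eq_toNat_length]
  exact_mod_cast hlength

lemma IsCMLocal.exact_koszulDiff [IsLocalRing R] (hR : IsCMLocal R) (hdim : ringKrullDim R = 2)
    {a b : R} (hab : maximalIdeal R ≤ (Ideal.span {a, b}).radical) :
    Function.Exact (koszulDiff₂ a b) (koszulDiff₁ a b) := by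
  obtain ⟨rs, hmem, hreg, hlen⟩ := hR
  rw [hdim] at hlen
  obtain ⟨u, v, rfl⟩ := List.length_eq_two.1 (by exact_mod_cast hlen)
  refine _root_.exact_koszulDiff hreg.toIsWeaklyRegular (le_trans ?_ hab)
  simpa [Ideal.span_le, Set.pair_subset_iff] using hmem

end Koszul

section FiniteDifference

open scoped fwdDiff
open Filter fwdDiff_aux

/-- The functions `M → A` that are polynomial of degree `< k` in the sense of the calculus of
finite differences: every `k`-fold iterated forward difference, in arbitrary and possibly
distinct directions, vanishes. -/
def fwdDegreeLT (M A : Type*) [AddCommMonoid M] [AddCommGroup A] : ℕ → Submodule ℤ (M → A)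
  | 0 => ⊥
  | k + 1 => ⨅ v, (fwdDegreeLT M A k).comap (fwdDiffₗ M A v)

variable {M : Type*} [AddCommGroup M]

section AddCommGroup

variable {A : Type*} [AddCommGroup A]

lemma mem_fwdDegreeLT_succ {f : M → A} {k : ℕ} :
    f ∈ fwdDegreeLT M A (k + 1) ↔ ∀ v, Δ_[v] f ∈ fwdDegreeLT M A k := by
  simp only [fwdDegreeLT, Submodule.mem_iInf, Submodule.mem_comap]
  rfl

lemma fwdDegreeLT_mono : Monotone (fwdDegreeLT M A) := by
  refine monotone_nat_of_le_succ fun k => ?_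
  induction k with
  | zero => exact bot_le
  | succ k ih => exact fun f hf => mem_fwdDegreeLT_succ.2 fun v => ih (mem_fwdDegreeLT_succ.1 hf v)

lemma mem_fwdDegreeLT_one {f : M → A} : f ∈ fwdDegreeLT M A 1 ↔ ∀ m n, f m = f n := by
  rw [← zero_add 1, mem_fwdDegreeLT_succ]
  simp only [fwdDegreeLT, Submodule.mem_bot, funext_iff, fwdDiff, Pi.zero_apply, sub_eq_zero]
  exact ⟨fun h m n => by simpa using h (m - n) n, fun h v n => h _ _⟩

lemma fwdDiff_fwdDiff_eq_of_mem_fwdDegreeLT {P : M → A} (hP : P ∈ fwdDegreeLT M A 3) (u v m n : M) :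
    Δ_[u] (Δ_[v] P) m = Δ_[u] (Δ_[v] P) n :=
  mem_fwdDegreeLT_one.1 (mem_fwdDegreeLT_succ.1 (mem_fwdDegreeLT_succ.1 hP v) u) m n

end AddCommGroup

section CommRing

variable {A : Type*} [CommRing A]

lemma mul_mem_fwdDegreeLT {a b : ℕ} {f g : M → A} (hf : f ∈ fwdDegreeLT M A (a + 1))
    (hg : g ∈ fwdDegreeLT M A (b + 1)) : f * g ∈ fwdDegreeLT M A (a + b + 1) := by
  suffices H : ∀ n a b : ℕ, a + b = n → ∀ f ∈ fwdDegreeLT M A a, ∀ g ∈ fwdDegreeLT M A b,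
      f * g ∈ fwdDegreeLT M A (a + b - 1) by
    simpa [add_right_comm, ← add_assoc] using H _ _ _ rfl f hf g hg
  clear hf hg f g a b
  intro n
  induction n using Nat.strong_induction_on with | _ n ih
  rintro (_ | a) (_ | b) hab f hf g hg
  iterate 3 simp_all [fwdDegreeLT]
  rw [Nat.add_succ_sub_one, add_right_comm]
  refine mem_fwdDegreeLT_succ.2 fun v => ?_
  have hΔf := mem_fwdDegreeLT_succ.1 hf v
  have hΔg := mem_fwdDegreeLT_succ.1 hg v
  have hΔfg : Δ_[v] f * g ∈ fwdDegreeLT M A (a + b) := ih _ (by omega) a (b + 1) rfl _ hΔf _ hg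
  have hfΔg : f * Δ_[v] g ∈ fwdDegreeLT M A (a + b) := by
    simpa [add_right_comm] using ih _ (by omega) (a + 1) b rfl _ hf _ hΔg
  have hΔfΔg : Δ_[v] f * Δ_[v] g ∈ fwdDegreeLT M A (a + b) :=
    fwdDegreeLT_mono (Nat.sub_le _ _) (ih _ (by omega) a b rfl _ hΔf _ hΔg)
  rw [← smul_eq_mul, fwdDiff_smul]
  exact add_mem (add_mem hΔfg hfΔg) hΔfΔg

lemma prod_mem_fwdDegreeLT {ι : Type*} (T : Finset ι) {d : ι → ℕ} {f : ι → M → A}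
    (hf : ∀ i ∈ T, f i ∈ fwdDegreeLT M A (d i + 1)) :
    ∏ i ∈ T, f i ∈ fwdDegreeLT M A (∑ i ∈ T, d i + 1) := by
  classical
  induction T using Finset.induction_on with
  | empty => exact mem_fwdDegreeLT_one.2 fun _ _ => rfl
  | insert i T hi ih =>
    rw [Finset.prod_insert hi, Finset.sum_insert hi]
    exact mul_mem_fwdDegreeLT (hf i (Finset.mem_insert_self i T))
      (ih fun j hj => hf j (Finset.mem_insert_of_mem hj))

lemma choose_mem_fwdDegreeLT [BinomialRing A] (φ : M →+ A) (z : A) (k : ℕ) :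
    (fun x => Ring.choose (φ x + z) k) ∈ fwdDegreeLT M A (k + 1) := by
  induction k using Nat.strong_induction_on with | _ k ih
  refine mem_fwdDegreeLT_succ.2 fun v => ?_
  cases k with
  | zero =>
    simp only [Ring.choose_zero_right, fwdDiff_const]
    exact zero_mem _
  | succ k =>
    have hΔ : Δ_[v] (fun x => Ring.choose (φ x + z) (k + 1)) =
        ∑ p ∈ antidiagonal k, (fun x => Ring.choose (φ x + z) p.1) *
          (fun _ => Ring.choose (φ v) (p.2 + 1)) := by
      ext x
      simp only [fwdDiff, map_add, Finset.sum_apply, Pi.mul_apply]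
      rw [add_right_comm, Ring.add_choose_eq _ (Commute.all _ _),
        Finset.Nat.sum_antidiagonal_succ', Ring.choose_zero_right, mul_one, add_sub_cancel_left]
    rw [hΔ]
    refine Submodule.sum_mem _ fun p hp => ?_
    have hpk : p.1 ≤ k := le_self_add.trans_eq (mem_antidiagonal.1 hp)
    exact fwdDegreeLT_mono (Nat.succ_le_succ hpk) <|
      mul_mem_fwdDegreeLT (b := 0) (ih p.1 (Nat.lt_succ_of_le hpk))
        (mem_fwdDegreeLT_one.2 fun _ _ => rfl)

end CommRing

section Order

variable [PartialOrder M] [IsOrderedAddMonoid M] {A : Type*} [AddCommGroup A] {f g : M → A}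

lemma eventuallyEq_fwdDiff (h : f =ᶠ[atTop] g) (v : M) : Δ_[v] f =ᶠ[atTop] Δ_[v] g := by
  filter_upwards [h, (tendsto_atTop_add_const_right _ v tendsto_id).eventually h] with n hn hnv
  simp only [fwdDiff, hn, id_eq] at hnv ⊢
  rw [hnv]

lemma eqOn_Ici_iff_eqOn_fwdDiff {v : M} (hv : 0 ≤ v)
    (hv_tendsto : Tendsto (fun k : ℕ => k • v) atTop atTop) (h : f =ᶠ[atTop] g) (m : M) :
    Set.EqOn f g (Set.Ici m) ↔ Set.EqOn (Δ_[v] f) (Δ_[v] g) (Set.Ici m) := by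
  constructor
  · intro hfg n hn
    rw [fwdDiff, fwdDiff, hfg hn, hfg (Set.mem_Ici.2 (le_add_of_le_of_nonneg hn hv))]
  · intro hΔ
    have hdescend (k : ℕ) : ∀ n, m ≤ n → f (n + k • v) = g (n + k • v) → f n = g n := by
      induction k with
      | zero => simp
      | succ k ih =>
        intro n hn heq
        have hstep : f (n + v) = g (n + v) :=
          ih (n + v) (le_add_of_le_of_nonneg hn hv) (by
            rwa [succ_nsmul', ← add_assoc] at heq)
        have hΔn := hΔ hn
        rw [fwdDiff, fwdDiff, hstep] at hΔn
        exact sub_right_injective hΔn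
    intro n hn
    obtain ⟨k, hk⟩ :=
      ((tendsto_atTop_add_const_left _ n hv_tendsto).eventually h).exists
    exact hdescend k n hn hk

end Order

lemma hilbPoly_mem_fwdDegreeLT (s d : ℕ) (c : (Fin s → ℕ) → ℤ) :
    hilbPoly s d c ∈ fwdDegreeLT (Fin s → ℤ) ℤ (d + 1) := by
  have hsum : hilbPoly s d c =
      ∑ α : Fin s → Fin (d + 1) with ∑ i, (α i : ℕ) ≤ d,
        ((-1) ^ (d - ∑ i, (α i : ℕ)) * c fun i => (α i : ℕ)) • ∏ i, fun n : Fin s → ℤ =>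
          Ring.choose (Pi.evalAddMonoidHom (fun _ => ℤ) i n + ((α i : ℕ) - 1 : ℤ)) (α i : ℕ) := by
    ext n
    simp [hilbPoly, Finset.sum_apply, Finset.prod_apply, add_sub_assoc]
  rw [hsum]
  refine Submodule.sum_mem _ fun α hα => Submodule.smul_mem _ _ ?_
  exact fwdDegreeLT_mono (Nat.succ_le_succ (Finset.mem_filter.1 hα).2)
    (prod_mem_fwdDegreeLT _ fun i _ => choose_mem_fwdDegreeLT _ _ _)

end FiniteDifference

section Filtration

open scoped fwdDiff
open Filter

lemma evec_nonneg (s : ℕ) : 0 ≤ evec s := fun _ => zero_le_one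

lemma tendsto_nsmul_evec (s : ℕ) : Tendsto (fun k : ℕ => k • evec s) atTop atTop := by
  refine tendsto_atTop.2 fun b => ?_
  filter_upwards [eventually_all.2 fun i => eventually_ge_atTop (b i).toNat] with k hk i
  simpa [evec] using Int.toNat_le.1 (hk i)

lemma eventually_atTop_of_exists_forall_le {s : ℕ} {p : (Fin s → ℤ) → Prop}
    (h : ∃ N : ℕ, ∀ n : Fin s → ℤ, (∀ i, (N : ℤ) ≤ n i) → p n) : ∀ᶠ n in atTop, p n := by
  obtain ⟨N, hN⟩ := h
  exact (eventually_ge_atTop fun _ => (N : ℤ)).mono hN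

variable {R : Type*} [CommRing R] {s : ℕ} {I : Fin s → Ideal R}

lemma maximalIdeal_le_radical_prodPow [IsLocalRing R] (hI : ∀ i, IsMPrimary R (I i))
    (n : Fin s → ℤ) : maximalIdeal R ≤ (prodPow I n).radical := by
  rw [prodPow]
  induction (Finset.univ : Finset (Fin s)) using Finset.induction_on with
  | empty => simp [Ideal.one_eq_top, Ideal.radical_top]
  | insert i T hi ih =>
    rw [Finset.prod_insert hi, Ideal.radical_mul]
    refine le_inf ?_ ih
    rcases eq_or_ne (n i).toNat 0 with h0 | h0
    · simp [h0, Ideal.one_eq_top, Ideal.radical_top]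
    · exact ((I i).radical_pow h0).symm ▸ (hI i).2

lemma crIdeal_eq_span_pair (x : Fin s → Fin 2 → R) :
    crIdeal x = Ideal.span {∏ i, x i 0, ∏ i, x i 1} := by
  rw [crIdeal]
  congr 1
  ext z
  simp [Fin.exists_fin_two, eq_comm]

namespace AdmissibleFiltration

variable (F : AdmissibleFiltration R s I)

lemma F_zero : F.F 0 = ⊤ := by
  exact (Ideal.eq_top_iff_one _).2 (by simpa [prodPow, ← Ideal.one_eq_top] using F.prodPow_le 0)

variable {F} in
lemma mul_mem {m n : Fin s → ℤ} {a b : R} (ha : a ∈ F.F m) (hb : b ∈ F.F n) :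
    a * b ∈ F.F (m + n) :=
  F.mul_le m n (Ideal.mul_mem_mul ha hb)

lemma le_F_single (i : Fin s) : I i ≤ F.F (Pi.single i 1) := by
  refine le_trans (le_of_eq ?_) (F.prodPow_le (Pi.single i 1))
  rw [prodPow, Finset.prod_eq_single_of_mem i (Finset.mem_univ i) (fun j _ hj => by simp [hj])]
  simp

lemma prod_mem {x : Fin s → R} (hx : ∀ i, x i ∈ I i) (T : Finset (Fin s)) :
    ∏ i ∈ T, x i ∈ F.F (∑ i ∈ T, Pi.single i 1) := by
  induction T using Finset.induction_on with
  | empty => simp [F.F_zero]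
  | insert i T hi ih =>
    rw [Finset.prod_insert hi, Finset.sum_insert hi]
    exact mul_mem (F.le_F_single i (hx i)) ih

lemma prod_univ_mem {x : Fin s → R} (hx : ∀ i, x i ∈ I i) : ∏ i, x i ∈ F.F (evec s) :=
  Finset.univ_sum_single (evec s) ▸ F.prod_mem hx Finset.univ

lemma prod_erase_mem {x : Fin s → R} (hx : ∀ i, x i ∈ I i) (i : Fin s) :
    ∏ k ∈ Finset.univ.erase i, x k ∈ F.F (evec s - Pi.single i 1) := by
  have hsum : ∑ k ∈ Finset.univ.erase i, Pi.single k 1 = evec s - Pi.single i 1 := by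
    rw [Finset.sum_erase_eq_sub (Finset.mem_univ i)]
    exact congrArg (· - _) (Finset.univ_sum_single (evec s))
  exact hsum ▸ F.prod_mem hx _

lemma span_prod_mul_le {x : Fin s → R} (hx : ∀ i, x i ∈ I i) (i : Fin s) (n : Fin s → ℤ) :
    Ideal.span {∏ k, x k} * F.F n ≤ Ideal.span {x i} * F.F (n + evec s - Pi.single i 1) := by
  rw [← Finset.mul_prod_erase Finset.univ x (Finset.mem_univ i),
    ← Ideal.span_singleton_mul_span_singleton, mul_assoc]
  refine Ideal.mul_mono_right (Ideal.span_singleton_mul_le_iff.2 fun z hz => ?_)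
  have hmem := mul_mem (F.prod_erase_mem hx i) hz
  rwa [sub_add_eq_add_sub, add_comm (evec s)] at hmem

lemma pow_le (n : Fin s → ℤ) (k : ℕ) : F.F n ^ k ≤ F.F (k • n) := by
  induction k with
  | zero => simp [F.F_zero]
  | succ k ih =>
    rw [pow_succ, succ_nsmul]
    exact (Ideal.mul_mono_left ih).trans (F.mul_le _ _)

lemma hilbFn_vplus (n : Fin s → ℤ) : hilbFn F (vplus n) = hilbFn F n := by
  rw [hilbFn, hilbFn, ← F.plus_eq]

lemma fwdDiff_single_hilbFn_eq_zero {n : Fin s → ℤ} {i : Fin s} (hi : n i < 0) :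
    Δ_[Pi.single i 1] (hilbFn F) n = 0 := by
  have hplus : vplus (n + Pi.single i 1) = vplus n := by
    funext k
    rcases eq_or_ne k i with rfl | hk
    · simp only [vplus, Pi.add_apply, Pi.single_eq_same]
      omega
    · simp [vplus, hk]
  rw [fwdDiff, ← F.hilbFn_vplus, hplus, F.hilbFn_vplus, sub_self]

variable {u v : Fin s → ℤ} {a b : R}

lemma span_mul_sup_span_mul_le (ha : a ∈ F.F u) (hb : b ∈ F.F v) (m : Fin s → ℤ) :
    Ideal.span {a} * F.F (m + v) ⊔ Ideal.span {b} * F.F (m + u) ≤ F.F (m + u + v) := by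
  refine sup_le ?_ ?_ <;> rw [Ideal.span_singleton_mul_le_iff] <;> intro z hz
  · exact (by abel : u + (m + v) = m + u + v) ▸ mul_mem ha hz
  · exact (by abel : v + (m + u) = m + u + v) ▸ mul_mem hb hz

lemma le_colon_inf_colon (ha : a ∈ F.F u) (hb : b ∈ F.F v) (m : Fin s → ℤ) :
    F.F m ≤ (F.F (m + v)).colon {b} ⊓ (F.F (m + u)).colon {a} := fun _ ht =>
  ⟨Submodule.mem_colon_singleton.2 (mul_mem ht hb),
    Submodule.mem_colon_singleton.2 (mul_mem ht ha)⟩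

variable [IsLocalRing R]

lemma maximalIdeal_le_radical (hI : ∀ i, IsMPrimary R (I i)) (n : Fin s → ℤ) :
    maximalIdeal R ≤ (F.F n).radical :=
  (maximalIdeal_le_radical_prodPow hI n).trans (Ideal.radical_mono (F.prodPow_le n))

variable [IsNoetherianRing R]

lemma length_quotient_ne_top (hI : ∀ i, IsMPrimary R (I i)) (n : Fin s → ℤ) :
    Module.length R (R ⧸ F.F n) ≠ ⊤ :=
  _root_.length_quotient_ne_top (F.maximalIdeal_le_radical hI n)

lemma fwdDiff_fwdDiff_hilbFn (hR : IsCMLocal R) (hdim : ringKrullDim R = 2)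
    (hI : ∀ i, IsMPrimary R (I i)) (hab : maximalIdeal R ≤ (Ideal.span {a, b}).radical)
    (u v m : Fin s → ℤ) :
    Δ_[u] (Δ_[v] (hilbFn F)) m - lenI R (R ⧸ Ideal.span {a, b}) =
      (hilbFn F m - lenI R (R ⧸ ((F.F (m + v)).colon {b} ⊓ (F.F (m + u)).colon {a}))) -
        (lenI R (R ⧸ (Ideal.span {a} * F.F (m + v) ⊔ Ideal.span {b} * F.F (m + u))) -
          hilbFn F (m + u + v)) := by
  have h := lenI_quotient_koszul (hR.exact_koszulDiff hdim hab)
    (F.length_quotient_ne_top hI (m + v)) (F.length_quotient_ne_top hI (m + u))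
    (_root_.length_quotient_ne_top hab)
  simp only [fwdDiff, hilbFn]
  linarith

lemma lenI_quotient_span_pair_le_fwdDiff_fwdDiff (hR : IsCMLocal R) (hdim : ringKrullDim R = 2)
    (hI : ∀ i, IsMPrimary R (I i)) (hab : maximalIdeal R ≤ (Ideal.span {a, b}).radical)
    (ha : a ∈ F.F u) (hb : b ∈ F.F v) {m : Fin s → ℤ}
    (hm : Ideal.span {a} * F.F (m + v) ⊔ Ideal.span {b} * F.F (m + u) = F.F (m + u + v)) :
    lenI R (R ⧸ Ideal.span {a, b}) ≤ Δ_[u] (Δ_[v] (hilbFn F)) m := by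
  have h := F.fwdDiff_fwdDiff_hilbFn hR hdim hI hab u v m
  rw [hm] at h
  have hcolon := lenI_quotient_le_of_le (F.le_colon_inf_colon ha hb m)
    (F.length_quotient_ne_top hI m)
  simp only [hilbFn] at h ⊢
  linarith

lemma fwdDiff_fwdDiff_eq_lenI_iff (hR : IsCMLocal R) (hdim : ringKrullDim R = 2)
    (hI : ∀ i, IsMPrimary R (I i)) (hab : maximalIdeal R ≤ (Ideal.span {a, b}).radical)
    (ha : a ∈ F.F u) (hb : b ∈ F.F v) {m : Fin s → ℤ}
    (hm : (F.F (m + v)).colon {b} ⊓ (F.F (m + u)).colon {a} ≤ F.F m) :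
    Δ_[u] (Δ_[v] (hilbFn F)) m = lenI R (R ⧸ Ideal.span {a, b}) ↔
      Ideal.span {a} * F.F (m + v) ⊔ Ideal.span {b} * F.F (m + u) = F.F (m + u + v) := by
  have h := F.fwdDiff_fwdDiff_hilbFn hR hdim hI hab u v m
  rw [hm.antisymm (F.le_colon_inf_colon ha hb m)] at h
  have hfin := (length_quotient_koszul_ne_top (hR.exact_koszulDiff hdim hab)
    (F.length_quotient_ne_top hI (m + v)) (F.length_quotient_ne_top hI (m + u))
    (_root_.length_quotient_ne_top hab)).2
  simp only [hilbFn] at h ⊢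
  refine ⟨fun heq => eq_of_le_of_lenI_quotient_eq (F.span_mul_sup_span_mul_le ha hb m) hfin ?_,
    fun heq => ?_⟩
  · linarith
  · rw [heq] at h
    linarith

end AdmissibleFiltration

end Filtration

section Reduction

open scoped fwdDiff
open Filter

variable {R : Type*} [CommRing R] {s d : ℕ} {I : Fin s → Ideal R} {F : AdmissibleFiltration R s I}

namespace IsCompleteReduction

section General

variable {x : Fin s → Fin d → R}

lemma eventually (hx : IsCompleteReduction F x) :
    ∀ᶠ n in atTop, crIdeal x * F.F n = F.F (n + evec s) :=
  eventually_atTop_of_exists_forall_le hx.2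

lemma pow_succ_le (hx : IsCompleteReduction F x) :
    ∃ k : ℕ, F.F (evec s) ^ (k + 1) ≤ crIdeal x * F.F (k • evec s) := by
  obtain ⟨k, hk⟩ := ((tendsto_nsmul_evec s).eventually hx.eventually).exists
  exact ⟨k, hk.symm ▸ succ_nsmul (evec s) k ▸ F.pow_le (evec s) (k + 1)⟩

lemma maximalIdeal_le_radical [IsLocalRing R] (hx : IsCompleteReduction F x)
    (hI : ∀ i, IsMPrimary R (I i)) : maximalIdeal R ≤ (crIdeal x).radical := by
  obtain ⟨k, hk⟩ := hx.pow_succ_le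
  calc maximalIdeal R ≤ (F.F (evec s)).radical := F.maximalIdeal_le_radical hI _
    _ = (F.F (evec s) ^ (k + 1)).radical := (Ideal.radical_pow _ k.succ_ne_zero).symm
    _ ≤ (crIdeal x).radical := Ideal.radical_mono (hk.trans Ideal.mul_le_left)

lemma colon_crIdeal_le_ratliffRush (hx : IsCompleteReduction F x) (m : Fin s → ℤ) :
    (F.F (m + evec s)).colon (crIdeal x : Set R) ≤ ratliffRush F m := by
  obtain ⟨k, hk⟩ := hx.pow_succ_le
  intro t ht
  refine (le_iSup (fun k : ℕ => (F.F (m + (k + 1) • evec s)).colon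
    ((F.F (evec s) ^ (k + 1) : Ideal R) : Set R)) k) (Submodule.mem_colon.2 fun z hz => ?_)
  refine Submodule.mul_induction_on (hk hz) (fun y hy w hw => ?_) fun y w hy hw => ?_
  · have hmem := AdmissibleFiltration.mul_mem (Submodule.mem_colon.1 ht y hy) hw
    rwa [smul_mul_assoc, add_assoc, ← succ_nsmul'] at hmem
  · rw [smul_add]
    exact add_mem hy hw

end General

variable {x : Fin s → Fin 2 → R}

lemma eventually_span_mul_sup_span_mul_eq (hx : IsCompleteReduction F x) (i j : Fin s) :
    ∀ᶠ m : Fin s → ℤ in atTop, Ideal.span {x i 0} * F.F (m + Pi.single j 1) ⊔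
      Ideal.span {x j 1} * F.F (m + Pi.single i 1) =
        F.F (m + Pi.single i 1 + Pi.single j 1) := by
  have hlim := tendsto_atTop_add_const_right (atTop : Filter (Fin s → ℤ))
    (Pi.single i 1 + Pi.single j 1 - evec s) tendsto_id
  filter_upwards [hlim.eventually hx.eventually] with m hm
  refine (F.span_mul_sup_span_mul_le (F.le_F_single i (hx.1 i 0))
    (F.le_F_single j (hx.1 j 1)) m).antisymm ?_
  have h₀ := F.span_prod_mul_le (fun k => hx.1 k 0) i
    (m + (Pi.single i 1 + Pi.single j 1 - evec s))
  have h₁ := F.span_prod_mul_le (fun k => hx.1 k 1) j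
    (m + (Pi.single i 1 + Pi.single j 1 - evec s))
  rw [id, add_assoc, sub_add_cancel, ← add_assoc, crIdeal_eq_span_pair, Ideal.span_insert,
    Ideal.sup_mul] at hm
  rw [← hm]
  refine sup_le_sup (h₀.trans_eq ?_) (h₁.trans_eq ?_) <;> congr 2 <;> abel

section LocalRing

variable [IsLocalRing R]

lemma maximalIdeal_le_radical_span_pair (hx : IsCompleteReduction F x)
    (hI : ∀ i, IsMPrimary R (I i)) (i j : Fin s) :
    maximalIdeal R ≤ (Ideal.span {x i 0, x j 1}).radical := by
  refine (hx.maximalIdeal_le_radical hI).trans (Ideal.radical_mono ?_)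
  rw [crIdeal_eq_span_pair, Ideal.span_le, Set.pair_subset_iff]
  exact ⟨Ideal.mem_of_dvd _ (Finset.dvd_prod_of_mem (x · 0) (Finset.mem_univ i))
      (Ideal.subset_span (Set.mem_insert _ _)),
    Ideal.mem_of_dvd _ (Finset.dvd_prod_of_mem (x · 1) (Finset.mem_univ j))
      (Ideal.subset_span (Set.mem_insert_of_mem _ rfl))⟩

variable [IsNoetherianRing R]

lemma eventually_fwdDiff_fwdDiff_hilbFn_pos (hx : IsCompleteReduction F x) (hR : IsCMLocal R)
    (hdim : ringKrullDim R = 2) (hI : ∀ i, IsMPrimary R (I i)) (i j : Fin s) :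
    ∀ᶠ m in atTop, 0 < Δ_[Pi.single i 1] (Δ_[Pi.single j 1] (hilbFn F)) m := by
  have hrad := hx.maximalIdeal_le_radical_span_pair hI i j
  have hmem (k : Fin s) (l : Fin 2) : x k l ∈ maximalIdeal R :=
    le_maximalIdeal (hI k).1 (hx.1 k l)
  have hne : Ideal.span {x i 0, x j 1} ≠ ⊤ := ne_top_of_le_ne_top (maximalIdeal.isMaximal R).ne_top
    (Ideal.span_le.2 (Set.pair_subset (hmem i 0) (hmem j 1)))
  filter_upwards [hx.eventually_span_mul_sup_span_mul_eq i j] with m hm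
  exact (lenI_quotient_pos hne hrad).trans_le
    (F.lenI_quotient_span_pair_le_fwdDiff_fwdDiff hR hdim hI hrad (F.le_F_single i (hx.1 i 0))
      (F.le_F_single j (hx.1 j 1)) hm)

lemma fwdDiff_fwdDiff_hilbFn_eq_iff (hx : IsCompleteReduction F x) (hR : IsCMLocal R)
    (hdim : ringKrullDim R = 2) (hI : ∀ i, IsMPrimary R (I i)) {m : Fin s → ℤ}
    (hm : ratliffRush F m = F.F m) :
    Δ_[evec s] (Δ_[evec s] (hilbFn F)) m = lenI R (R ⧸ crIdeal x) ↔
      crIdeal x * F.F (m + evec s) = F.F (m + evec s + evec s) := by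
  have hcolon := (hx.colon_crIdeal_le_ratliffRush m).trans_eq hm
  have hrad := hx.maximalIdeal_le_radical hI
  rw [crIdeal_eq_span_pair] at hcolon hrad ⊢
  rw [F.fwdDiff_fwdDiff_eq_lenI_iff hR hdim hI hrad (F.prod_univ_mem fun i => hx.1 i 0)
    (F.prod_univ_mem fun i => hx.1 i 1), Ideal.span_insert, Ideal.sup_mul]
  refine le_trans (fun t ht => ?_) hcolon
  rw [Ideal.colon_span]
  simpa [Submodule.mem_colon, and_comm] using ht

end LocalRing

end IsCompleteReduction

namespace IsHilbCoeffs

variable {c : (Fin s → ℕ) → ℤ}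

lemma eventuallyEq (hc : IsHilbCoeffs F d c) : hilbFn F =ᶠ[atTop] hilbPoly s d c :=
  (eventually_atTop_of_exists_forall_le hc).mono fun _ => Eq.symm

lemma eventually_fwdDiff_fwdDiff_hilbFn_eq (hc : IsHilbCoeffs F 2 c) (u v n : Fin s → ℤ) :
    ∀ᶠ m in atTop, Δ_[u] (Δ_[v] (hilbFn F)) m = Δ_[u] (Δ_[v] (hilbPoly s 2 c)) n :=
  (eventuallyEq_fwdDiff (eventuallyEq_fwdDiff hc.eventuallyEq v) u).mono fun m hm =>
    hm.trans (fwdDiff_fwdDiff_eq_of_mem_fwdDegreeLT (hilbPoly_mem_fwdDegreeLT s 2 c) u v m n)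

variable {x : Fin s → Fin 2 → R} [IsLocalRing R] [IsNoetherianRing R]

lemma fwdDiff_fwdDiff_hilbPoly_pos (hc : IsHilbCoeffs F 2 c) (hx : IsCompleteReduction F x)
    (hR : IsCMLocal R) (hdim : ringKrullDim R = 2) (hI : ∀ i, IsMPrimary R (I i)) (i j : Fin s)
    (n : Fin s → ℤ) : 0 < Δ_[Pi.single i 1] (Δ_[Pi.single j 1] (hilbPoly s 2 c)) n := by
  obtain ⟨m, hpos, heq⟩ := ((hx.eventually_fwdDiff_fwdDiff_hilbFn_pos hR hdim hI i j).and
    (hc.eventually_fwdDiff_fwdDiff_hilbFn_eq (Pi.single i 1) (Pi.single j 1) n)).exists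
  exact heq ▸ hpos

lemma fwdDiff_fwdDiff_hilbPoly_evec (hc : IsHilbCoeffs F 2 c) (hx : IsCompleteReduction F x)
    (hR : IsCMLocal R) (hdim : ringKrullDim R = 2) (hI : ∀ i, IsMPrimary R (I i))
    (hvanish : H1ReesVanishes F) (n : Fin s → ℤ) :
    Δ_[evec s] (Δ_[evec s] (hilbPoly s 2 c)) n = lenI R (R ⧸ crIdeal x) := by
  have hred := (tendsto_atTop_add_const_right _ (evec s) tendsto_id).eventually hx.eventually
  obtain ⟨m, heq, hm, hred⟩ := ((hc.eventually_fwdDiff_fwdDiff_hilbFn_eq (evec s) (evec s) n).and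
    ((eventually_ge_atTop 0).and hred)).exists
  exact heq.symm.trans ((hx.fwdDiff_fwdDiff_hilbFn_eq_iff hR hdim hI (hvanish m hm)).2 hred)

lemma postSet_subset_nonneg (hc : IsHilbCoeffs F 2 c) (hx : IsCompleteReduction F x)
    (hR : IsCMLocal R) (hdim : ringKrullDim R = 2) (hI : ∀ i, IsMPrimary R (I i)) (hs : 2 ≤ s) :
    postSet F 2 c ⊆ {n | 0 ≤ n} := by
  intro n hn i
  by_contra hi
  rw [Pi.zero_apply, not_le] at hi
  have : Nontrivial (Fin s) := Fin.nontrivial_iff_two_le.2 hs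
  obtain ⟨j, hj⟩ := exists_ne i
  refine (hc.fwdDiff_fwdDiff_hilbPoly_pos hx hR hdim hI j i n).ne ?_
  have hi' : (n + Pi.single j 1 : Fin s → ℤ) i < 0 := by simpa [hj.symm] using hi
  have hH : Δ_[Pi.single j 1] (Δ_[Pi.single i 1] (hilbFn F)) n = 0 := by
    rw [fwdDiff, F.fwdDiff_single_hilbFn_eq_zero hi, F.fwdDiff_single_hilbFn_eq_zero hi', sub_self]
  rw [← hH]
  have hle (m : Fin s → ℤ) (k : Fin s) : m ≤ m + Pi.single k 1 :=
    le_add_of_nonneg_right (Pi.single_nonneg.2 zero_le_one)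
  simp only [fwdDiff, hn _ le_rfl, hn _ (hle n _), hn _ ((hle n j).trans (hle _ i))]

lemma mem_postSet_iff_add_evec_mem_redSet (hc : IsHilbCoeffs F 2 c) (hx : IsCompleteReduction F x)
    (hR : IsCMLocal R) (hdim : ringKrullDim R = 2) (hI : ∀ i, IsMPrimary R (I i))
    (hvanish : H1ReesVanishes F) {n : Fin s → ℤ} (hn : 0 ≤ n) :
    n ∈ postSet F 2 c ↔ n + evec s ∈ redSet F x := by
  have he := evec_nonneg s
  have hlim := tendsto_nsmul_evec s
  calc n ∈ postSet F 2 c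
      ↔ Set.EqOn (Δ_[evec s] (Δ_[evec s] (hilbFn F)))
          (Δ_[evec s] (Δ_[evec s] (hilbPoly s 2 c))) (Set.Ici n) :=
        (eqOn_Ici_iff_eqOn_fwdDiff he hlim hc.eventuallyEq n).trans
          (eqOn_Ici_iff_eqOn_fwdDiff he hlim (eventuallyEq_fwdDiff hc.eventuallyEq _) n)
    _ ↔ ∀ m, n ≤ m → crIdeal x * F.F (m + evec s) = F.F (m + evec s + evec s) :=
        forall₂_congr fun m hm => by
          rw [hc.fwdDiff_fwdDiff_hilbPoly_evec hx hR hdim hI hvanish,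
            hx.fwdDiff_fwdDiff_hilbFn_eq_iff hR hdim hI (hvanish m (hn.trans hm))]
    _ ↔ n + evec s ∈ redSet F x := by
        refine ⟨fun h => ⟨add_nonneg hn he, fun q hq => ?_⟩,
          fun h m hm => h.2 _ (add_le_add_left hm _)⟩
        simpa using h (q - evec s) (le_sub_iff_add_le.2 hq)

end IsHilbCoeffs

end Reduction

theorem postulation_reduction_correspondence_dim_two_general
    (R : Type*) [CommRing R] [IsLocalRing R] [IsNoetherianRing R]
    (s : ℕ) (hs : 2 ≤ s) (hdim : ringKrullDim R = 2) (hCM : IsCMLocal R)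
    (I : Fin s → Ideal R) (hI : ∀ i, IsMPrimary R (I i))
    (F : AdmissibleFiltration R s I)
    (c : (Fin s → ℕ) → ℤ) (hc : IsHilbCoeffs F 2 c)
    (x : Fin s → Fin 2 → R) (hx : IsCompleteReduction F x)
    (hvanish : H1ReesVanishes F) :
    postSet F 2 c ⊆ {n | 0 ≤ n}
    ∧ (∀ n ∈ postSet F 2 c, n + evec s ∈ redSet F x ∧ evec s ≤ n + evec s)
    ∧ (∀ r ∈ redSet F x, evec s ≤ r → r - evec s ∈ postSet F 2 c) := by
  have hnonneg := hc.postSet_subset_nonneg hx hCM hdim hI hs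
  have hiff {n : Fin s → ℤ} (hn : 0 ≤ n) : n ∈ postSet F 2 c ↔ n + evec s ∈ redSet F x :=
    hc.mem_postSet_iff_add_evec_mem_redSet hx hCM hdim hI hvanish hn
  refine ⟨hnonneg, fun n hn => ⟨(hiff (hnonneg hn)).1 hn, le_add_of_nonneg_left (hnonneg hn)⟩,
    fun r hr her => (hiff (sub_nonneg.2 her)).2 ?_⟩
  rwa [sub_add_cancel]

/-- STATEMENT 17: Let `(R,m)` be Cohen–Macaulay local of dimension two with infinite
residue field, `I₁,…,I_s` `m`-primary with `s ≥ 2`, `F` an `I`-admissible filtration,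
`A` a good complete reduction of `F`, and suppose `H¹_{R₊₊}(R(F))_n = 0` for all `n ≥ 0`
(by Proposition 4.1 of the paper this is the condition `F̆(n) = F(n)` for all `n ≥ 0`).
Then `P(F) ⊆ ℕˢ` and `f(n) = n + e` is a one-to-one correspondence between `P(F)` and
`{r ∈ R_A(F) : r ≥ e}`, with inverse `r ↦ r − e`. -/
theorem postulation_reduction_correspondence_dim_two
    (R : Type*) [CommRing R] [IsLocalRing R] [IsNoetherianRing R]
    [Infinite (IsLocalRing.ResidueField R)]
    (s : ℕ) (hs : 2 ≤ s) (hdim : ringKrullDim R = 2) (hCM : IsCMLocal R)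
    (I : Fin s → Ideal R) (hI : ∀ i, IsMPrimary R (I i))
    (F : AdmissibleFiltration R s I)
    (c : (Fin s → ℕ) → ℤ) (hc : IsHilbCoeffs F 2 c)
    (x : Fin s → Fin 2 → R) (hx : IsGoodCompleteReduction F x)
    (hvanish : H1ReesVanishes F) :
    postSet F 2 c ⊆ {n | 0 ≤ n}
    ∧ (∀ n ∈ postSet F 2 c, n + evec s ∈ redSet F x ∧ evec s ≤ n + evec s)
    ∧ (∀ r ∈ redSet F x, evec s ≤ r → r - evec s ∈ postSet F 2 c) :=
  postulation_reduction_correspondence_dim_two_general R s hs hdim hCM I hI F c hc x hx.1 hvanish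
end
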